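/- arXiv:2011.05835 — 2 statements merged into one kernel-verified Lean document; each statement's English description precedes it below -/
import Mathlib

section
/- Let X = ℓ∞³, Y = ℓ₁³, and let T : X → Y be a bounded linear operator with ‖T‖ = 1 such that M_T ∩ Ext(B_X) = {±x₁, ±x₂, ±x₃, ±x₄}. Suppose Tx is smooth for every x ∈ M_T ∩ Ext(B_X) (i.e., |S₁| = 8), and suppose there exist x_i, x_j ∈ S₁ with ±J(Tx_i) ≠ ±J(Tx_j). Then T is 4-smooth, i.e., dim span J(T) = 4. -/
open Metric Set Module Pointwise

noncomputable section

/-- `J x` is the set of supporting functionals of `x`. -/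
def suppFunctionals {E : Type*} [NormedAddCommGroup E] [NormedSpace ℝ E] (x : E) :
    Set (E →L[ℝ] ℝ) := {f | ‖f‖ = 1 ∧ f x = 1}

/-- ℓ∞³ : ℝ³ with the max norm. -/
abbrev Linf3 := Fin 3 → ℝ

/-- ℓ₁³ : ℝ³ with the ℓ¹ norm. -/
abbrev L13 := PiLp 1 (fun _ : Fin 3 => ℝ)

def x₁ : Linf3 := ![1, 1, 1]
def x₂ : Linf3 := ![-1, 1, 1]
def x₃ : Linf3 := ![-1, -1, 1]
def x₄ : Linf3 := ![1, -1, 1]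

/-- `M_T ∩ Ext(B_X)`: the norm-attainment set of `T` intersected with the
extreme points of the closed unit ball. -/
def MTExt (T : Linf3 →L[ℝ] L13) : Set Linf3 :=
  {x ∈ sphere (0 : Linf3) 1 | ‖T x‖ = ‖T‖} ∩ extremePoints ℝ (closedBall (0 : Linf3) 1)

/-- `Sk T k` is the set `S_k` of points `x` of `M_T ∩ Ext(B_X)` such that `T x` is
`k`-smooth. -/
def Sk (T : Linf3 →L[ℝ] L13) (k : ℕ) : Set Linf3 :=
  {x ∈ MTExt T | finrank ℝ (Submodule.span ℝ (suppFunctionals (T x))) = k}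

/-- `±A`, i.e. `A ∪ (-A)`. -/
def pm {E : Type*} [NormedAddCommGroup E] [NormedSpace ℝ E] (A : Set (E →L[ℝ] ℝ)) :
    Set (E →L[ℝ] ℝ) := A ∪ (-A)

/-!
If the unit ball of `X` is the absolutely convex hull of `v₁, …, vₙ`, then `S ↦ (S v₁, …, S vₙ)`
embeds `L(X, Y)` isometrically into `Yⁿ` with the maximum norm. Extending a supporting functional
of `T` to `Yⁿ` by Hahn–Banach and splitting it into components shows that `J(T)` is spanned by the
functionals `g ⊗ vⱼ : S ↦ g (S vⱼ)` with `g ∈ J(T vⱼ)`.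

If every `T vⱼ` is smooth, with `J(T vⱼ) = {gⱼ}`, it remains to see that the `gⱼ ⊗ vⱼ` are
independent. A relation `∑ cⱼ gⱼ ⊗ vⱼ = 0` gives the relations `∑ cⱼ gⱼ(y) vⱼ = 0` for all `y ∈ Y`.
For the cube, no nontrivial relation between the four vertices has a zero coefficient, whereas
`gᵢ ≠ ±gₖ` allows one to choose `y` with `gᵢ y = 0 ≠ gₖ y`.
-/

section SupportingFunctionals

variable {E : Type*} [NormedAddCommGroup E] [NormedSpace ℝ E]

lemma mem_suppFunctionals_of_norm_le {x : E} {f : E →L[ℝ] ℝ} (hx : ‖x‖ ≤ 1) (hf : ‖f‖ ≤ 1)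
    (hfx : f x = 1) : f ∈ suppFunctionals x :=
  ⟨le_antisymm hf (by simpa [hfx] using f.unit_le_opNorm x hx), hfx⟩

lemma mem_span_suppFunctionals_of_norm_le_apply {x : E} {f : E →L[ℝ] ℝ} (hx : ‖x‖ ≤ 1)
    (hf : ‖f‖ ≤ f x) : f ∈ Submodule.span ℝ (suppFunctionals x) := by
  obtain rfl | hf0 := eq_or_ne f 0
  · exact Submodule.zero_mem _
  have hnorm : ‖f‖ ≠ 0 := norm_ne_zero_iff.mpr hf0
  have hfx : f x = ‖f‖ := le_antisymm ((le_abs_self _).trans (f.unit_le_opNorm x hx)) hf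
  have hmem : ‖f‖⁻¹ • f ∈ suppFunctionals x := by
    refine ⟨?_, ?_⟩
    · rw [norm_smul, norm_inv, norm_norm, inv_mul_cancel₀ hnorm]
    · rw [smul_apply, hfx, smul_eq_mul, inv_mul_cancel₀ hnorm]
  rw [← smul_inv_smul₀ hnorm f]
  exact Submodule.smul_mem _ _ (Submodule.subset_span hmem)

lemma suppFunctionals_neg (x : E) : suppFunctionals (-x) = -suppFunctionals x := by
  ext f
  simp [suppFunctionals]

lemma pm_neg (A : Set (E →L[ℝ] ℝ)) : pm (-A) = pm A := by
  rw [pm, pm, neg_neg, union_comm]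

lemma exists_suppFunctionals_eq_singleton {x : E}
    (h : finrank ℝ (Submodule.span ℝ (suppFunctionals x)) = 1) :
    ∃ f, suppFunctionals x = {f} := by
  have hne : (suppFunctionals x).Nonempty := by
    by_contra hempty
    rw [not_nonempty_iff_eq_empty.mp hempty, Submodule.span_empty, finrank_bot] at h
    exact zero_ne_one h
  obtain ⟨f, hf⟩ := hne
  refine ⟨f, Subset.antisymm (fun g hg ↦ ?_) (singleton_subset_iff.mpr hf)⟩
  let W := Submodule.span ℝ (suppFunctionals x)
  have hf0 : (⟨f, Submodule.subset_span hf⟩ : W) ≠ 0 := by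
    intro h0
    have : f = 0 := congrArg Subtype.val h0
    simpa [this] using hf.2
  obtain ⟨c, hc⟩ :=
    (finrank_eq_one_iff_of_nonzero' (K := ℝ) (V := W) _ hf0).mp h ⟨g, Submodule.subset_span hg⟩
  have hcg : c • f = g := congrArg Subtype.val hc
  have hc1 : c = 1 := by simpa [← hcg, hf.2] using hg.2
  rw [mem_singleton_iff, ← hcg, hc1, one_smul]

lemma exists_apply_eq_zero_and_apply_ne_zero {f g : E →L[ℝ] ℝ} (hfg : ‖f‖ = ‖g‖) (hne : f ≠ g)
    (hne' : f ≠ -g) : ∃ x, f x = 0 ∧ g x ≠ 0 := by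
  by_contra! hker
  obtain ⟨c, hc⟩ : ∃ c : ℝ, c • f = g := by
    have hmem : (g : E →ₗ[ℝ] ℝ) ∈ Submodule.span ℝ (range fun _ : Unit ↦ (f : E →ₗ[ℝ] ℝ)) :=
      mem_span_of_iInf_ker_le_ker fun x hx ↦ hker x (by simpa using hx)
    rw [range_const, Submodule.mem_span_singleton] at hmem
    obtain ⟨c, hc⟩ := hmem
    exact ⟨c, ContinuousLinearMap.coe_injective hc⟩
  have hf0 : ‖f‖ ≠ 0 := by
    intro hf0
    exact hne ((norm_eq_zero.mp hf0).trans (norm_eq_zero.mp (hfg ▸ hf0)).symm)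
  have habs : |c| = 1 := by
    rw [← hc, norm_smul, Real.norm_eq_abs] at hfg
    exact mul_right_cancel₀ hf0 (by rw [one_mul, ← hfg])
  rcases eq_or_eq_neg_of_abs_eq habs with rfl | rfl
  · exact hne (by rw [← hc, one_smul])
  · exact hne' (neg_eq_iff_eq_neg.mp ((neg_one_smul ℝ f).symm.trans hc))

lemma exists_extension_comp_linearIsometry {E' : Type*} [NormedAddCommGroup E'] [NormedSpace ℝ E']
    (e : E →ₗᵢ[ℝ] E') (f : E →L[ℝ] ℝ) : ∃ g : E' →L[ℝ] ℝ, (∀ x, g (e x) = f x) ∧ ‖g‖ ≤ ‖f‖ := by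
  let eRange := e.equivRange
  obtain ⟨g, hg, hnorm⟩ := exists_extension_norm_eq (LinearMap.range e.toLinearMap)
    (f.comp eRange.symm.toContinuousLinearEquiv.toContinuousLinearMap)
  refine ⟨g, fun x ↦ ?_, hnorm.trans_le ?_⟩
  · calc g (e x) = f (eRange.symm (eRange x)) := hg (eRange x)
      _ = f x := by rw [LinearIsometryEquiv.symm_apply_apply]
  · refine ContinuousLinearMap.opNorm_le_bound _ (norm_nonneg f) fun z ↦ ?_
    simpa using f.le_opNorm (eRange.symm z)

end SupportingFunctionals

lemma comp_single_mem_span_suppFunctionals {ι : Type*} [Fintype ι] [DecidableEq ι]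
    {E : ι → Type*} [∀ j, NormedAddCommGroup (E j)] [∀ j, NormedSpace ℝ (E j)]
    {y : ∀ j, E j} (hy : ‖y‖ ≤ 1) {f : (∀ j, E j) →L[ℝ] ℝ} (hf : f ∈ suppFunctionals y) (j : ι) :
    f.comp (ContinuousLinearMap.single ℝ E j) ∈ Submodule.span ℝ (suppFunctionals (y j)) := by
  refine mem_span_suppFunctionals_of_norm_le_apply ((norm_le_pi_norm y j).trans hy) ?_
  -- Replacing the `j`-th coordinate of `y` by `z` stays in the unit ball, where `f` peaks at `y`.
  have hle (z : E j) (hz : ‖z‖ ≤ 1) : f (Pi.single j z) ≤ f (Pi.single j (y j)) := by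
    have hupdate : Function.update y j z = y + (Pi.single j z - Pi.single j (y j)) := by
      ext k
      obtain rfl | hk := eq_or_ne k j <;> simp [*]
    have hnorm : ‖Function.update y j z‖ ≤ 1 := by
      refine (pi_norm_le_iff_of_nonneg zero_le_one).mpr fun k ↦ ?_
      obtain rfl | hk := eq_or_ne k j
      · simpa using hz
      · simpa [hk] using (norm_le_pi_norm y k).trans hy
    have : f (Function.update y j z) ≤ 1 := by
      simpa [hf.1] using (le_abs_self _).trans (f.le_of_opNorm_le_of_le le_rfl hnorm)
    rw [hupdate, map_add, map_sub, hf.2] at this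
    linarith
  refine ContinuousLinearMap.opNorm_le_of_unit_norm ?_ fun z hz ↦ abs_le.mpr ⟨?_, hle z hz.le⟩
  · simpa using hle 0 (by simp)
  · have := hle (-z) (by simpa using hz.le)
    rw [Pi.single_neg, map_neg] at this
    exact neg_le.mp this

lemma linearIndepOn_compl_singleton_iff {R M ι : Type*} [Ring R] [AddCommGroup M] [Module R M]
    [Fintype ι] {v : ι → M} {i : ι} :
    LinearIndepOn R v {i}ᶜ ↔ ∀ c : ι → R, c i = 0 → ∑ j, c j • v j = 0 → c = 0 := by
  classical
  have hsum (c : ι → R) (hci : c i = 0) : ∑ j ∈ {i}ᶜ, c j • v j = ∑ j, c j • v j := by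
    simp [← Finset.sum_compl_add_sum {i}, hci]
  rw [← Finset.coe_singleton, ← Finset.coe_compl, linearIndepOn_finset_iff]
  refine ⟨fun h c hci hc ↦ funext fun j ↦ ?_, fun h c hc j hj ↦ ?_⟩
  · obtain rfl | hj := eq_or_ne j i
    · exact hci
    · exact h c ((hsum c hci).trans hc) j (by simpa using hj)
  · have hji : j ≠ i := by simpa using hj
    have hzero := h (Function.update c i 0) (by simp) (by
      rw [← hsum _ (by simp), ← hc]
      exact Finset.sum_congr rfl fun k hk ↦ by
        rw [Function.update_of_ne (by simpa using hk)])
    simpa [hji] using congrFun hzero j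

section Operators

variable {ι X Y : Type*} [NormedAddCommGroup X] [NormedSpace ℝ X] [NormedAddCommGroup Y]
  [NormedSpace ℝ Y]

/-- The functional `g ⊗ x : S ↦ g (S x)` on the space of operators, as a function of `g`. -/
def dualTensor (x : X) : (Y →L[ℝ] ℝ) →L[ℝ] (X →L[ℝ] Y) →L[ℝ] ℝ :=
  ContinuousLinearMap.precomp ℝ (ContinuousLinearMap.apply ℝ Y x)

@[simp]
lemma dualTensor_apply (x : X) (g : Y →L[ℝ] ℝ) (S : X →L[ℝ] Y) : dualTensor x g S = g (S x) := rfl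

lemma norm_dualTensor_apply_le (x : X) (g : Y →L[ℝ] ℝ) : ‖dualTensor x g‖ ≤ ‖g‖ * ‖x‖ := by
  refine ContinuousLinearMap.opNorm_le_bound _ (by positivity) fun S ↦ ?_
  calc ‖g (S x)‖ ≤ ‖g‖ * (‖S‖ * ‖x‖) := g.le_opNorm_of_le (S.le_opNorm x)
    _ = ‖g‖ * ‖x‖ * ‖S‖ := by ring

lemma dualTensor_mem_suppFunctionals {T : X →L[ℝ] Y} (hT : ‖T‖ ≤ 1) {x : X} (hx : ‖x‖ ≤ 1)
    {g : Y →L[ℝ] ℝ} (hg : g ∈ suppFunctionals (T x)) : dualTensor x g ∈ suppFunctionals T := by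
  refine mem_suppFunctionals_of_norm_le hT ?_ hg.2
  simpa [hg.1] using (norm_dualTensor_apply_le x g).trans (mul_le_of_le_one_right (by simp) hx)

lemma norm_apply_le_of_mem_absConvexHull (S : X →L[ℝ] Y) {s : Set X} {r : ℝ}
    (hs : ∀ x ∈ s, ‖S x‖ ≤ r) {x : X} (hx : x ∈ absConvexHull ℝ s) : ‖S x‖ ≤ r := by
  have hconv : AbsConvex ℝ (S ⁻¹' closedBall 0 r) :=
    ⟨balanced_closedBall_zero.mulActionHom_preimage (f := (S : X →ₑ[RingHom.id ℝ] Y)),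
      (convex_closedBall 0 r).linear_preimage S.toLinearMap⟩
  have hsub : s ⊆ S ⁻¹' closedBall 0 r := fun y hy ↦ by simpa using hs y hy
  simpa using absConvexHull_min hsub hconv hx

variable {v : ι → X}

lemma exists_pm_suppFunctionals_eq {T : X →L[ℝ] Y} {x : X} (hx : x ∈ range v ∪ -range v) :
    ∃ j, pm (suppFunctionals (T x)) = pm (suppFunctionals (T (v j))) := by
  obtain ⟨j, rfl⟩ | ⟨j, hj⟩ := hx
  · exact ⟨j, rfl⟩
  · exact ⟨j, by rw [hj, map_neg, suppFunctionals_neg, pm_neg]⟩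

lemma exists_pm_suppFunctionals_ne {T : X →L[ℝ] Y} {s : Set X} (hs : s ⊆ range v ∪ -range v)
    (hJ : ∃ x ∈ s, ∃ y ∈ s, pm (suppFunctionals (T x)) ≠ pm (suppFunctionals (T y))) :
    ∃ i k, pm (suppFunctionals (T (v i))) ≠ pm (suppFunctionals (T (v k))) := by
  obtain ⟨x, hx, y, hy, hxy⟩ := hJ
  obtain ⟨i, hi⟩ := exists_pm_suppFunctionals_eq (T := T) (hs hx)
  obtain ⟨k, hk⟩ := exists_pm_suppFunctionals_eq (T := T) (hs hy)
  exact ⟨i, k, hi ▸ hk ▸ hxy⟩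

lemma norm_le_one_of_closedBall_eq_absConvexHull (hv : closedBall 0 1 = absConvexHull ℝ (range v))
    (j : ι) : ‖v j‖ ≤ 1 := by
  rw [← mem_closedBall_zero_iff, hv]
  exact subset_absConvexHull (mem_range_self j)

/-- Evaluation at points `vⱼ` whose absolutely convex hull is the unit ball, as an isometric
embedding of the space of operators into a finite power of the codomain with the maximum norm. -/
def evalLinearIsometry [Fintype ι] (Y : Type*) [NormedAddCommGroup Y] [NormedSpace ℝ Y]
    (hv : closedBall 0 1 = absConvexHull ℝ (range v)) : (X →L[ℝ] Y) →ₗᵢ[ℝ] (ι → Y) where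
  toFun S j := S (v j)
  map_add' _ _ := rfl
  map_smul' _ _ := rfl
  norm_map' S := by
    refine le_antisymm ((pi_norm_le_iff_of_nonneg (norm_nonneg S)).mpr fun j ↦ ?_) ?_
    · exact S.unit_le_opNorm _ (norm_le_one_of_closedBall_eq_absConvexHull hv j)
    · refine ContinuousLinearMap.opNorm_le_of_unit_norm (norm_nonneg _) fun x hx ↦ ?_
      refine norm_apply_le_of_mem_absConvexHull S (s := range v) ?_ (hv ▸ by simp [hx])
      rintro _ ⟨j, rfl⟩
      exact norm_le_pi_norm (fun j ↦ S (v j)) j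

theorem span_suppFunctionals_eq_iSup [Finite ι]
    (hv : closedBall 0 1 = absConvexHull ℝ (range v)) {T : X →L[ℝ] Y} (hT : ‖T‖ ≤ 1) :
    Submodule.span ℝ (suppFunctionals T) =
      ⨆ j, Submodule.span ℝ (dualTensor (v j) '' suppFunctionals (T (v j))) := by
  classical
  cases nonempty_fintype ι
  refine le_antisymm (Submodule.span_le.mpr fun F hF ↦ ?_)
    (iSup_le fun j ↦ Submodule.span_mono ?_)
  · let e := evalLinearIsometry Y hv
    obtain ⟨G, hG, hGF⟩ := exists_extension_comp_linearIsometry e F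
    have heT : ‖e T‖ ≤ 1 := (e.norm_map T).trans_le hT
    have hGT : G ∈ suppFunctionals (e T) :=
      mem_suppFunctionals_of_norm_le heT (hGF.trans_eq hF.1) ((hG T).trans hF.2)
    have hsum : F = ∑ j, dualTensor (v j) (G.comp (ContinuousLinearMap.single ℝ _ j)) := by
      ext S
      rw [← hG, ← G.sum_comp_single, sum_apply]
      rfl
    rw [SetLike.mem_coe, hsum]
    refine Submodule.sum_mem _ fun j _ ↦ Submodule.mem_iSup_of_mem j ?_
    exact Submodule.apply_mem_span_image_of_mem_span (dualTensor (v j)).toLinearMap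
      (comp_single_mem_span_suppFunctionals heT hGT j)
  · rintro _ ⟨g, hg, rfl⟩
    exact dualTensor_mem_suppFunctionals hT (norm_le_one_of_closedBall_eq_absConvexHull hv j) hg

lemma sum_apply_smul_eq_zero_of_sum_dualTensor_eq_zero [Fintype ι] {g : ι → Y →L[ℝ] ℝ}
    (h : ∑ j, dualTensor (v j) (g j) = 0) (y : Y) : ∑ j, g j y • v j = 0 := by
  refine SeparatingDual.eq_zero_of_forall_dual_eq_zero (R := ℝ) fun ξ ↦ ?_
  have := DFunLike.congr_fun h (ξ.smulRight y)
  simpa [sum_apply, mul_comm] using this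

theorem linearIndependent_dualTensor [Finite ι] (hv : ∀ i, LinearIndepOn ℝ v {i}ᶜ)
    {g : ι → Y →L[ℝ] ℝ} (hg : ∀ j, ‖g j‖ = 1) {i k : ι} (hne : g i ≠ g k) (hne' : g i ≠ -g k) :
    LinearIndependent ℝ fun j ↦ dualTensor (v j) (g j) := by
  cases nonempty_fintype ι
  simp only [linearIndepOn_compl_singleton_iff] at hv
  rw [Fintype.linearIndependent_iff]
  intro c hc
  have hrel (y : Y) : ∑ j, (c j * g j y) • v j = 0 :=
    sum_apply_smul_eq_zero_of_sum_dualTensor_eq_zero (g := fun j ↦ c j • g j)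
      (by simpa only [map_smul] using hc) y
  obtain ⟨y, hiy, hky⟩ :=
    exists_apply_eq_zero_and_apply_ne_zero ((hg i).trans (hg k).symm) hne hne'
  have hck : c k = 0 := by
    have := congrFun (hv i _ (by simp [hiy]) (hrel y)) k
    exact (mul_eq_zero.mp this).resolve_right hky
  intro j
  have hcg : c j • g j = 0 := by
    ext z
    exact congrFun (hv k _ (by simp [hck]) (hrel z)) j
  exact (smul_eq_zero.mp hcg).resolve_right (norm_ne_zero_iff.mp (by simp [hg j]))

theorem stmt_10_general [Fintype ι] (hv : closedBall 0 1 = absConvexHull ℝ (range v))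
    (hcircuit : ∀ i, LinearIndepOn ℝ v {i}ᶜ) {T : X →L[ℝ] Y} (hT : ‖T‖ ≤ 1)
    (hsmooth : ∀ j, finrank ℝ (Submodule.span ℝ (suppFunctionals (T (v j)))) = 1)
    (hJ : ∃ i k, pm (suppFunctionals (T (v i))) ≠ pm (suppFunctionals (T (v k)))) :
    finrank ℝ (Submodule.span ℝ (suppFunctionals T)) = Fintype.card ι := by
  choose g hg using fun j ↦ exists_suppFunctionals_eq_singleton (hsmooth j)
  have hnorm (j : ι) : ‖g j‖ = 1 := by
    have hmem : g j ∈ suppFunctionals (T (v j)) := by simp [hg]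
    exact hmem.1
  obtain ⟨i, k, hik⟩ := hJ
  rw [hg, hg] at hik
  have hne : g i ≠ g k := fun h ↦ hik (by rw [h])
  have hne' : g i ≠ -g k := fun h ↦ hik (by rw [h, ← neg_singleton, pm_neg])
  have hspan : Submodule.span ℝ (suppFunctionals T) =
      Submodule.span ℝ (range fun j ↦ dualTensor (v j) (g j)) := by
    simp only [span_suppFunctionals_eq_iSup hv hT, hg, image_singleton,
      Submodule.span_range_eq_iSup]
  rw [hspan, finrank_span_eq_card (linearIndependent_dualTensor hcircuit hnorm hne hne')]

end Operators

section Cube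

lemma closedBall_pi_eq_convexHull {ι : Type*} [Fintype ι] :
    closedBall (0 : ι → ℝ) 1 = convexHull ℝ (univ.pi fun _ ↦ {-1, 1}) := by
  rw [convexHull_pi, closedBall_pi _ zero_le_one]
  simp [convexHull_pair, segment_eq_Icc, Real.closedBall_eq_Icc]

/-- The vertices `x₁, x₂, x₃, x₄`, one from each antipodal pair of vertices of the cube. -/
def vertex : Fin 4 → Linf3 := ![x₁, x₂, x₃, x₄]

lemma range_vertex_union_neg :
    range vertex ∪ -range vertex = {x₁, -x₁, x₂, -x₂, x₃, -x₃, x₄, -x₄} := by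
  ext x
  simp only [vertex, Matrix.range_cons, Matrix.range_empty, union_empty, union_singleton,
    union_insert, neg_insert, neg_singleton, mem_insert_iff, mem_singleton_iff]
  tauto

lemma pi_pm_one_eq_range_vertex_union_neg :
    (univ.pi fun _ : Fin 3 ↦ ({-1, 1} : Set ℝ)) = range vertex ∪ -range vertex := by
  rw [range_vertex_union_neg]
  ext x
  simp only [mem_pi, mem_univ, mem_insert_iff, mem_singleton_iff, forall_const, Fin.forall_fin_succ,
    Fin.succ_zero_eq_one, Fin.succ_one_eq_two, IsEmpty.forall_iff, and_true, x₁,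
    Matrix.neg_cons, Matrix.neg_empty, x₂, neg_neg, x₃, x₄, funext_iff, Matrix.cons_val_zero,
    Matrix.cons_val_succ, Matrix.cons_val_fin_one]
  tauto

lemma closedBall_eq_absConvexHull_range_vertex :
    closedBall 0 1 = absConvexHull ℝ (range vertex) := by
  rw [closedBall_pi_eq_convexHull, pi_pm_one_eq_range_vertex_union_neg,
    convexHull_union_neg_eq_absConvexHull]

lemma linearIndepOn_vertex_compl_singleton (i : Fin 4) : LinearIndepOn ℝ vertex {i}ᶜ := by
  rw [linearIndepOn_compl_singleton_iff]
  intro c hci hc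
  have h0 : c 0 - c 1 - c 2 + c 3 = 0 := by
    simpa [Fin.sum_univ_four, vertex, x₁, x₂, x₃, x₄, sub_eq_add_neg] using congrFun hc 0
  have h1 : c 0 + c 1 - c 2 - c 3 = 0 := by
    simpa [Fin.sum_univ_four, vertex, x₁, x₂, x₃, x₄, sub_eq_add_neg] using congrFun hc 1
  have h2 : c 0 + c 1 + c 2 + c 3 = 0 := by
    simpa [Fin.sum_univ_four, vertex, x₁, x₂, x₃, x₄] using congrFun hc 2
  have hrel : c 1 = -c 0 ∧ c 2 = c 0 ∧ c 3 = -c 0 := by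
    refine ⟨?_, ?_, ?_⟩ <;> linarith
  ext j
  fin_cases i <;> fin_cases j <;> simp_all

lemma encard_range_vertex_union_neg_le : (range vertex ∪ -range vertex).encard ≤ 8 := by
  have hrange : (range vertex).encard ≤ 4 := by
    simpa using encard_image_le vertex univ
  have hneg : (-range vertex).encard = (range vertex).encard := encard_neg _
  calc (range vertex ∪ -range vertex).encard
      ≤ (range vertex).encard + (-range vertex).encard := encard_union_le _ _
    _ ≤ 4 + 4 := add_le_add hrange (hneg.trans_le hrange)
    _ = 8 := by norm_num

variable {T : Linf3 →L[ℝ] L13}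

lemma Sk_one_eq_range_vertex_union_neg
    (hMT : MTExt T = {x₁, -x₁, x₂, -x₂, x₃, -x₃, x₄, -x₄}) (h1 : (Sk T 1).encard = 8) :
    Sk T 1 = range vertex ∪ -range vertex := by
  have hsub : Sk T 1 ⊆ range vertex ∪ -range vertex := by
    rw [range_vertex_union_neg, ← hMT]
    exact sep_subset _ _
  refine Finite.eq_of_subset_of_encard_le (finite_of_encard_eq_coe h1) hsub ?_
  exact h1 ▸ encard_range_vertex_union_neg_le

lemma vertex_mem_Sk_one (hMT : MTExt T = {x₁, -x₁, x₂, -x₂, x₃, -x₃, x₄, -x₄})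
    (h1 : (Sk T 1).encard = 8) (j : Fin 4) : vertex j ∈ Sk T 1 := by
  rw [Sk_one_eq_range_vertex_union_neg hMT h1]
  exact Or.inl (mem_range_self j)

end Cube

theorem stmt_10
    (T : Linf3 →L[ℝ] L13) (hT : ‖T‖ = 1)
    (hMT : MTExt T = {x₁, -x₁, x₂, -x₂, x₃, -x₃, x₄, -x₄})
    (h1 : (Sk T 1).encard = 8)
    (hJ : ∃ xi ∈ Sk T 1, ∃ xj ∈ Sk T 1,
      pm (suppFunctionals (T xi)) ≠ pm (suppFunctionals (T xj)))
    :
    finrank ℝ (Submodule.span ℝ (suppFunctionals T)) = 4 := by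
  exact stmt_10_general closedBall_eq_absConvexHull_range_vertex
    linearIndepOn_vertex_compl_singleton hT.le (fun j ↦ (vertex_mem_Sk_one hMT h1 j).2)
    (exists_pm_suppFunctionals_ne (Sk_one_eq_range_vertex_union_neg hMT h1).subset hJ)
end
end

section
/- Let X = ℓ∞³, Y = ℓ₁³, and let T : X → Y be a bounded linear operator with ‖T‖ = 1 such that M_T ∩ Ext(B_X) = {±x₁, ±x₂, ±x₃, ±x₄}. Suppose |S₁| = 6, |S₂| = 2 and |S₃| = 0. If ±J(Tx_i) = ±J(Tx_j) for all x_i, x_j ∈ S₁ and ±J(Tx_i) ⊆ ±Ext J(Tx_k) for all x_i ∈ S₁ and all x_k ∈ S₂, then T is 4-smooth, i.e., dim span J(T) = 4. -/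
open Metric Set Module Pointwise

noncomputable section

/-!
The operator `T` determines the tensors `h ⊗ v : A ↦ h (A v)` with `v` an extreme point of the unit
ball and `h ∈ J(Tv)`. They lie in `J(T)`. Conversely, if `A` is killed by all of them then
Hahn–Banach gives `‖Tv + tAv‖ ≤ 1 + o(t)` at each of the finitely many `v`, so
`‖T + tA‖ ≤ 1 + o(t)` and every `F ∈ J(T)` kills `A` too; hence these tensors span `J(T)`.
Under the hypotheses on `S₁` and `S₂` a single functional `g` lies in every `±J(Tv)` and spans
`J(Tv)` for all `v ≠ ±x₀`. So the span of `J(T)` is `g ⊗ X + span J(Tx₀) ⊗ x₀`, two summands that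
meet in the line of `g ⊗ x₀`.
-/

variable {E X Y : Type*} [NormedAddCommGroup E] [NormedSpace ℝ E] [NormedAddCommGroup X]
  [NormedSpace ℝ X] [NormedAddCommGroup Y] [NormedSpace ℝ Y]

lemma mem_submodule_of_forall_apply_eq_zero {W : Submodule ℝ (E →L[ℝ] ℝ)} [FiniteDimensional ℝ W]
    {F : E →L[ℝ] ℝ} (hF : ∀ x, (∀ G ∈ W, G x = 0) → F x = 0) : F ∈ W := by
  have hmem : (F : E →ₗ[ℝ] ℝ) ∈ W.map (ContinuousLinearMap.coeLM ℝ) := by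
    rw [← Subspace.dualCoannihilator_dualAnnihilator_eq (W := W.map (ContinuousLinearMap.coeLM ℝ)),
      Submodule.mem_dualAnnihilator]
    exact fun x hx ↦ hF x fun G hG ↦ (Submodule.mem_dualCoannihilator x).1 hx _ ⟨G, hG, rfl⟩
  obtain ⟨G, hG, hGF⟩ := hmem
  rwa [← ContinuousLinearMap.coe_injective hGF]

section UnitBall

lemma opNorm_le_of_closedBall_subset_convexHull {V : Set X} (hV : closedBall 0 1 ⊆ convexHull ℝ V)
    {A : X →L[ℝ] Y} {C : ℝ} (hC : 0 ≤ C) (hA : ∀ v ∈ V, ‖A v‖ ≤ C) : ‖A‖ ≤ C := by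
  have hconv : Convex ℝ (A ⁻¹' closedBall 0 C) :=
    (convex_closedBall (0 : Y) C).linear_preimage A.toLinearMap
  refine A.opNorm_le_of_unit_norm hC fun x hx ↦ ?_
  simpa using convexHull_min (fun v hv ↦ by simpa using hA v hv) hconv (hV (by simp [hx]))

lemma span_eq_top_of_closedBall_subset_convexHull {V : Set X}
    (hV : closedBall 0 1 ⊆ convexHull ℝ V) : Submodule.span ℝ V = ⊤ := by
  have hball : ball (0 : X) 1 ⊆ Submodule.span ℝ V :=
    (ball_subset_closedBall.trans hV).trans
      (convexHull_min Submodule.subset_span (Submodule.span ℝ V).convex)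
  exact Submodule.eq_top_of_nonempty_interior' _
    ⟨0, mem_interior.2 ⟨_, hball, isOpen_ball, mem_ball_self one_pos⟩⟩

lemma closedBall_subset_convexHull_extremePoints [FiniteDimensional ℝ X]
    (hfin : (extremePoints ℝ (closedBall (0 : X) 1)).Finite) :
    closedBall (0 : X) 1 ⊆ convexHull ℝ (extremePoints ℝ (closedBall (0 : X) 1)) := by
  have := FiniteDimensional.proper_real X
  have hball := closure_convexHull_extremePoints (isCompact_closedBall (0 : X) 1)
    (convex_closedBall 0 1)
  exact ((hfin.isClosed_convexHull ℝ).closure_eq.symm.trans hball).ge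

lemma neg_mem_extremePoints_closedBall {x : X} (hx : x ∈ extremePoints ℝ (closedBall (0 : X) 1)) :
    -x ∈ extremePoints ℝ (closedBall (0 : X) 1) := by
  have hmem := (image_extremePoints (LinearEquiv.neg ℝ) (closedBall (0 : X) 1)).subset ⟨x, hx, rfl⟩
  have hball : LinearEquiv.neg ℝ '' closedBall (0 : X) 1 = closedBall 0 1 := by simp
  rwa [hball] at hmem

lemma extremePoints_closedBall_pi (ι : Type*) [Fintype ι] :
    extremePoints ℝ (closedBall (0 : ι → ℝ) 1) = univ.pi fun _ ↦ {-1, 1} := by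
  simp only [closedBall_pi _ zero_le_one, extremePoints_pi, Pi.zero_apply, Real.closedBall_eq_Icc]
  simp

lemma encard_extremePoints_closedBall_pi (ι : Type*) [Fintype ι] :
    (extremePoints ℝ (closedBall (0 : ι → ℝ) 1)).encard = 2 ^ Fintype.card ι := by
  rw [extremePoints_closedBall_pi, encard_pi_eq_prod_encard]
  simp [encard_pair (show (-1 : ℝ) ≠ 1 by norm_num)]

end UnitBall

section SupportingFunctionals

lemma mem_suppFunctionals_of_norm_le_one {y : E} {h : E →L[ℝ] ℝ} (hy : ‖y‖ ≤ 1) (hh : ‖h‖ ≤ 1)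
    (hhy : h y = 1) : h ∈ suppFunctionals y := by
  have hle : ‖h y‖ ≤ ‖h‖ * 1 := h.le_opNorm_of_le hy
  rw [hhy, norm_one, mul_one] at hle
  exact ⟨le_antisymm hh hle, hhy⟩

lemma neg_mem_suppFunctionals_neg {y : E} {h : E →L[ℝ] ℝ} (hh : h ∈ suppFunctionals y) :
    -h ∈ suppFunctionals (-y) :=
  ⟨(norm_neg h).trans hh.1, by simpa using hh.2⟩

lemma span_suppFunctionals_neg (y : E) :
    Submodule.span ℝ (suppFunctionals (-y)) = Submodule.span ℝ (suppFunctionals y) := by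
  have hle (z : E) :
      Submodule.span ℝ (suppFunctionals (-z)) ≤ Submodule.span ℝ (suppFunctionals z) :=
    Submodule.span_le.2 fun h hh ↦ neg_neg h ▸ Submodule.neg_mem _
      (Submodule.subset_span (by simpa using neg_mem_suppFunctionals_neg hh))
  exact (hle y).antisymm (by simpa using hle (-y))

lemma mem_span_suppFunctionals_of_mem_pm {y : E} {h : E →L[ℝ] ℝ}
    (hh : h ∈ pm (suppFunctionals y)) : h ∈ Submodule.span ℝ (suppFunctionals y) :=
  hh.elim (fun h' ↦ Submodule.subset_span h')
    fun h' ↦ neg_neg h ▸ Submodule.neg_mem _ (Submodule.subset_span h')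

lemma ne_zero_of_mem_pm_suppFunctionals {y : E} {h : E →L[ℝ] ℝ}
    (hh : h ∈ pm (suppFunctionals y)) : h ≠ 0 := by
  rintro rfl
  simp [pm, suppFunctionals] at hh

lemma suppFunctionals_nonempty_of_finrank_ne_zero {y : E}
    (hy : finrank ℝ (Submodule.span ℝ (suppFunctionals y)) ≠ 0) :
    (suppFunctionals y).Nonempty := by
  contrapose! hy
  rw [hy, Submodule.span_empty, finrank_bot]

lemma exists_smul_eq_of_finrank_span_eq_one {y : E} {g h : E →L[ℝ] ℝ}
    (hy : finrank ℝ (Submodule.span ℝ (suppFunctionals y)) = 1)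
    (hg : g ∈ pm (suppFunctionals y)) (hh : h ∈ suppFunctionals y) : ∃ c : ℝ, c • g = h := by
  have hspan : Submodule.span ℝ {g} = Submodule.span ℝ (suppFunctionals y) :=
    have : FiniteDimensional ℝ (Submodule.span ℝ (suppFunctionals y)) := .of_finrank_eq_succ hy
    Submodule.eq_of_le_of_finrank_eq
      ((Submodule.span_singleton_le_iff_mem _ _).2 (mem_span_suppFunctionals_of_mem_pm hg))
      (by rw [finrank_span_singleton (ne_zero_of_mem_pm_suppFunctionals hg), hy])
  exact Submodule.mem_span_singleton.1 (hspan ▸ Submodule.subset_span hh)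

lemma inv_smul_mem_suppFunctionals {y : E} {f : E →L[ℝ] ℝ} {u : ℝ} (hu : 0 < u) (hy : ‖y‖ ≤ 1)
    (hf : ∀ x ∈ ball (0 : E) 1, f x < u) (hfy : u ≤ f y) : u⁻¹ • f ∈ suppFunctionals y := by
  have hfle : ∀ x ∈ closedBall (0 : E) 1, f x ≤ u := by
    rw [← closure_ball (0 : E) one_ne_zero]
    exact closure_minimal (fun x hx ↦ (hf x hx).le) (isClosed_le f.continuous continuous_const)
  have hfnorm : ‖f‖ ≤ u := f.opNorm_le_of_unit_norm hu.le fun x hx ↦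
    abs_le'.2 ⟨hfle x (by simp [hx]), by simpa using hfle (-x) (by simp [hx])⟩
  have hfyu : f y = u := (hfle y (by simpa using hy)).antisymm hfy
  refine mem_suppFunctionals_of_norm_le_one hy ?_ (by simp [hfyu, hu.ne'])
  rw [norm_smul, norm_inv, Real.norm_of_nonneg hu.le]
  exact inv_mul_le_one_of_le₀ hfnorm hu.le

lemma exists_mem_suppFunctionals_apply_nonneg {y w : E} {r : ℝ} (hy : ‖y‖ ≤ 1) (hr : 0 < r)
    (hw : ∀ t ∈ Ico 0 r, 1 ≤ ‖y + t • w‖) : ∃ h ∈ suppFunctionals y, 0 ≤ h w := by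
  have hdisj : Disjoint (ball (0 : E) 1) ((fun t : ℝ ↦ y + t • w) '' Ico 0 r) := by
    rw [Set.disjoint_right]
    rintro _ ⟨t, ht, rfl⟩ hball
    exact (hw t ht).not_gt (mem_ball_zero_iff.1 hball)
  have hconv : Convex ℝ ((fun t : ℝ ↦ y + t • w) '' Ico 0 r) := by
    simpa [image_image] using
      ((convex_Ico 0 r).linear_image (LinearMap.toSpanSingleton ℝ E w)).translate y
  obtain ⟨f, u, hfball, hfray⟩ :=
    geometric_hahn_banach_open (convex_ball (0 : E) 1) isOpen_ball hconv hdisj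
  have hu : 0 < u := by simpa using hfball 0 (by simp)
  have hfy : u ≤ f y := by simpa using hfray _ ⟨0, ⟨le_rfl, hr⟩, rfl⟩
  have hfyw : u ≤ f y + r / 2 * f w := by
    simpa using hfray _ ⟨r / 2, ⟨(half_pos hr).le, half_lt_self hr⟩, rfl⟩
  have hmem := inv_smul_mem_suppFunctionals hu hy hfball hfy
  have hfyu : u⁻¹ * f y = 1 := hmem.2
  have hfw : 0 ≤ f w := by
    rw [inv_mul_eq_one₀ hu.ne'] at hfyu
    exact nonneg_of_mul_nonneg_right (by linarith) (half_pos hr)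
  exact ⟨_, hmem, mul_nonneg (inv_nonneg.2 hu.le) hfw⟩

lemma one_le_norm_add_smul_sub {y z : E} {δ : ℝ} (hδ : 0 < δ)
    (hz : ∀ r > 0, 1 + r * δ < ‖y + r • z‖) {t : ℝ} (ht : t ∈ Ico 0 δ⁻¹) :
    1 ≤ ‖y + t • (z - δ • y)‖ := by
  obtain ⟨ht₀, htδ⟩ := ht
  rcases ht₀.eq_or_lt with rfl | ht₀
  · have hlim : Filter.Tendsto (fun r : ℝ ↦ ‖y + r • z‖) (nhdsWithin 0 (Ioi 0)) (nhds ‖y‖) := by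
      simpa using (show Continuous fun r : ℝ ↦ ‖y + r • z‖ by fun_prop).continuousWithinAt.tendsto
        (x := (0 : ℝ)) (s := Ioi 0)
    simpa using ge_of_tendsto hlim (eventually_mem_nhdsWithin.mono fun r hr ↦
      (le_add_of_nonneg_right (mul_pos hr hδ).le).trans (hz r hr).le)
  · have hr : 0 < 1 - t * δ := sub_pos.2 ((lt_inv_mul_iff₀' hδ).1 (by simpa using htδ))
    have hscale : y + t • (z - δ • y) = (1 - t * δ) • (y + (t / (1 - t * δ)) • z) := by
      match_scalars <;> field_simp
      ring
    rw [hscale, norm_smul, Real.norm_of_nonneg hr.le]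
    calc 1 = (1 - t * δ) * (1 + t / (1 - t * δ) * δ) := by field_simp; ring
      _ ≤ _ := by gcongr; exact (hz _ (div_pos ht₀ hr)).le

lemma eventually_norm_add_smul_le {y z : E} {δ : ℝ} (hy : ‖y‖ ≤ 1) (hδ : 0 < δ)
    (hz : ∀ h ∈ suppFunctionals y, h z ≤ 0) :
    ∀ᶠ t in nhdsWithin (0 : ℝ) (Ioi 0), ‖y + t • z‖ ≤ 1 + t * δ := by
  -- Otherwise the segment from `y` in direction `z - δ • y` avoids the open unit ball, and a
  -- functional separating the two supports `y` and is at least `δ` at `z`.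
  obtain ⟨r, hr, hrz⟩ : ∃ r > 0, ‖y + r • z‖ ≤ 1 + r * δ := by
    by_contra! hfar
    obtain ⟨h, hh, hhw⟩ := exists_mem_suppFunctionals_apply_nonneg (w := z - δ • y) hy
      (inv_pos.2 hδ) fun t ht ↦ one_le_norm_add_smul_sub hδ hfar ht
    have heval : h (z - δ • y) = h z - δ := by simp [hh.2]
    linarith [hz h hh]
  filter_upwards [Ioo_mem_nhdsGT hr] with t ht
  have hconv : y + t • z = (1 - t / r) • y + (t / r) • (y + r • z) := by
    match_scalars <;> field_simp
    ring
  have htr : t / r ≤ 1 := (div_le_one hr).2 ht.2.le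
  have htr₀ : 0 ≤ t / r := div_nonneg ht.1.le hr.le
  calc ‖y + t • z‖ ≤ (1 - t / r) * ‖y‖ + t / r * ‖y + r • z‖ := by
        rw [hconv]
        refine (norm_add_le _ _).trans_eq ?_
        rw [norm_smul, norm_smul, Real.norm_of_nonneg (sub_nonneg.2 htr), Real.norm_of_nonneg htr₀]
    _ ≤ (1 - t / r) * 1 + t / r * (1 + r * δ) := by
        gcongr
    _ = 1 + t * δ := by field_simp; ring

end SupportingFunctionals

section TensorFunctional

/-- The elementary tensor `h ⊗ x`, as the functional `A ↦ h (A x)` on operators `X → Y`; it is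
bundled as a bilinear map in `h` and `x`. -/
def tensorFunctional : (Y →L[ℝ] ℝ) →ₗ[ℝ] X →ₗ[ℝ] (X →L[ℝ] Y) →L[ℝ] ℝ :=
  LinearMap.mk₂ ℝ (fun h x ↦ h.comp (ContinuousLinearMap.apply ℝ Y x))
    (fun _ _ _ ↦ by ext; simp) (fun _ _ _ ↦ by ext; simp)
    (fun _ _ _ ↦ by ext; simp) (fun _ _ _ ↦ by ext; simp)

@[simp]
lemma tensorFunctional_apply (h : Y →L[ℝ] ℝ) (x : X) (A : X →L[ℝ] Y) :
    tensorFunctional h x A = h (A x) := rfl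

lemma smul_eq_smul_of_tensorFunctional_eq {g h : Y →L[ℝ] ℝ} {x z : X}
    (heq : tensorFunctional g x = tensorFunctional h z) (φ : X →L[ℝ] ℝ) : φ x • g = φ z • h := by
  ext y
  simpa using congr($heq (φ.smulRight y))

lemma tensorFunctional_injective {g : Y →L[ℝ] ℝ} (hg : g ≠ 0) :
    Function.Injective (tensorFunctional g : X →ₗ[ℝ] (X →L[ℝ] Y) →L[ℝ] ℝ) := by
  intro x z heq
  refine (SeparatingDual.eq_iff_forall_dual_eq (R := ℝ)).2 fun φ ↦ ?_
  exact smul_left_injective ℝ hg (smul_eq_smul_of_tensorFunctional_eq heq φ)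

lemma tensorFunctional_flip_injective {x : X} (hx : x ≠ 0) :
    Function.Injective ((tensorFunctional (Y := Y)).flip x) := by
  intro g h heq
  obtain ⟨φ, hφ⟩ := SeparatingDual.exists_eq_one (R := ℝ) hx
  simpa [hφ] using smul_eq_smul_of_tensorFunctional_eq heq φ

variable {g : Y →L[ℝ] ℝ} {x₀ : X} {P : Submodule ℝ (Y →L[ℝ] ℝ)}

lemma range_tensorFunctional_inf_map_flip (hgP : g ∈ P) (hx₀ : x₀ ≠ 0) :
    LinearMap.range (tensorFunctional g) ⊓ P.map (tensorFunctional.flip x₀) =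
      Submodule.span ℝ {tensorFunctional g x₀} := by
  refine le_antisymm ?_ ?_
  · rintro _ ⟨⟨x, rfl⟩, h, -, heq⟩
    obtain ⟨φ, hφ⟩ := SeparatingDual.exists_eq_one (R := ℝ) hx₀
    have hh : h = φ x • g := by
      simpa [hφ] using smul_eq_smul_of_tensorFunctional_eq heq φ
    rw [← heq, hh, map_smul]
    exact Submodule.smul_mem _ _ (Submodule.mem_span_singleton_self _)
  · rw [Submodule.span_singleton_le_iff_mem]
    exact ⟨⟨x₀, rfl⟩, g, hgP, rfl⟩

lemma finrank_range_tensorFunctional_sup_map_flip [FiniteDimensional ℝ X] [FiniteDimensional ℝ P]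
    (hgP : g ∈ P) (hg : g ≠ 0) (hx₀ : x₀ ≠ 0) :
    finrank ℝ ↥(LinearMap.range (tensorFunctional g) ⊔ P.map (tensorFunctional.flip x₀)) + 1 =
      finrank ℝ X + finrank ℝ P := by
  have htensor : tensorFunctional g x₀ ≠ 0 :=
    (map_ne_zero_iff _ (tensorFunctional_injective hg)).2 hx₀
  have hsum := Submodule.finrank_sup_add_finrank_inf_eq
    (LinearMap.range (tensorFunctional g)) (P.map (tensorFunctional.flip x₀))
  rwa [range_tensorFunctional_inf_map_flip hgP hx₀, finrank_span_singleton htensor,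
    LinearMap.finrank_range_of_inj (tensorFunctional_injective hg),
    (P.equivMapOfInjective _ (tensorFunctional_flip_injective hx₀)).finrank_eq.symm] at hsum

end TensorFunctional

section SupportingFunctionalsOfOperators

variable {T : X →L[ℝ] Y} {V : Set X}

lemma tensorFunctional_mem_suppFunctionals (hT : ‖T‖ = 1) {v : X} (hv : ‖v‖ ≤ 1) {h : Y →L[ℝ] ℝ}
    (hh : h ∈ suppFunctionals (T v)) : tensorFunctional h v ∈ suppFunctionals T := by
  refine mem_suppFunctionals_of_norm_le_one hT.le ?_ hh.2
  refine ContinuousLinearMap.opNorm_le_bound _ zero_le_one fun A ↦ ?_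
  calc ‖h (A v)‖ ≤ ‖h‖ * ‖A v‖ := h.le_opNorm _
    _ ≤ 1 * ‖A‖ := by rw [hh.1]; gcongr; exact A.unit_le_opNorm v hv

lemma suppFunctionals_apply_nonpos (hVfin : V.Finite) (hV : closedBall 0 1 ⊆ convexHull ℝ V)
    (hTV : ∀ v ∈ V, ‖T v‖ ≤ 1) {F : (X →L[ℝ] Y) →L[ℝ] ℝ} (hF : F ∈ suppFunctionals T)
    {A : X →L[ℝ] Y} (hA : ∀ v ∈ V, ∀ h ∈ suppFunctionals (T v), h (A v) ≤ 0) : F A ≤ 0 := by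
  refine le_of_forall_pos_le_add fun δ hδ ↦ ?_
  have hev : ∀ᶠ t in nhdsWithin (0 : ℝ) (Ioi 0), ∀ v ∈ V, ‖T v + t • A v‖ ≤ 1 + t * δ :=
    (Filter.eventually_all_finite hVfin).2 fun v hv ↦
      eventually_norm_add_smul_le (hTV v hv) hδ (hA v hv)
  obtain ⟨t, htV, ht⟩ := (hev.and self_mem_nhdsWithin).exists
  replace ht : 0 < t := ht
  have hnorm : ‖T + t • A‖ ≤ 1 + t * δ :=
    opNorm_le_of_closedBall_subset_convexHull hV (by positivity) (by simpa using htV)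
  have hle : 1 + t * F A ≤ 1 + t * δ := calc
    1 + t * F A = F (T + t • A) := by simp [hF.2]
    _ ≤ ‖F‖ * ‖T + t • A‖ := (le_abs_self _).trans (F.le_opNorm _)
    _ ≤ 1 + t * δ := by rwa [hF.1, one_mul]
  rw [zero_add]
  exact le_of_mul_le_mul_left (by linarith) ht

lemma suppFunctionals_subset_of_forall_tensorFunctional_mem (hVfin : V.Finite)
    (hV : closedBall 0 1 ⊆ convexHull ℝ V) (hTV : ∀ v ∈ V, ‖T v‖ ≤ 1)
    {W : Submodule ℝ ((X →L[ℝ] Y) →L[ℝ] ℝ)} [FiniteDimensional ℝ W]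
    (hW : ∀ v ∈ V, ∀ h ∈ suppFunctionals (T v), tensorFunctional h v ∈ W) :
    suppFunctionals T ⊆ W := by
  refine fun F hF ↦ mem_submodule_of_forall_apply_eq_zero fun A hA ↦ ?_
  have hvan : ∀ v ∈ V, ∀ h ∈ suppFunctionals (T v), h (A v) = 0 := fun v hv h hh ↦
    hA _ (hW v hv h hh)
  have hneg : F (-A) ≤ 0 :=
    suppFunctionals_apply_nonpos hVfin hV hTV hF fun v hv h hh ↦ by simp [hvan v hv h hh]
  rw [map_neg, neg_nonpos] at hneg
  exact hneg.antisymm'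
    (suppFunctionals_apply_nonpos hVfin hV hTV hF fun v hv h hh ↦ (hvan v hv h hh).le)

lemma span_suppFunctionals_eq_range_sup_map [FiniteDimensional ℝ X] (hT : ‖T‖ = 1)
    (hVfin : V.Finite) (hVball : V ⊆ closedBall 0 1) (hV : closedBall 0 1 ⊆ convexHull ℝ V)
    {g : Y →L[ℝ] ℝ} (hg : ∀ v ∈ V, g ∈ pm (suppFunctionals (T v))) {x₀ : X} (hx₀ : x₀ ∈ V)
    [FiniteDimensional ℝ (Submodule.span ℝ (suppFunctionals (T x₀)))]
    (hsmooth : ∀ v ∈ V, v ∉ ({x₀, -x₀} : Set X) →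
      finrank ℝ (Submodule.span ℝ (suppFunctionals (T v))) = 1) :
    Submodule.span ℝ (suppFunctionals T) = LinearMap.range (tensorFunctional g) ⊔
      (Submodule.span ℝ (suppFunctionals (T x₀))).map (tensorFunctional.flip x₀) := by
  have hVnorm : ∀ v ∈ V, ‖v‖ ≤ 1 := fun v hv ↦ by simpa using hVball hv
  have hle : ∀ v ∈ V, (Submodule.span ℝ (suppFunctionals (T v))).map (tensorFunctional.flip v) ≤
      Submodule.span ℝ (suppFunctionals T) := fun v hv ↦ by
    rw [Submodule.map_span_le]
    exact fun h hh ↦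
      Submodule.subset_span (tensorFunctional_mem_suppFunctionals hT (hVnorm v hv) hh)
  refine le_antisymm (Submodule.span_le.2 ?_) (sup_le ?_ (hle x₀ hx₀))
  · refine suppFunctionals_subset_of_forall_tensorFunctional_mem hVfin hV
      (fun v hv ↦ hT ▸ T.unit_le_opNorm v (hVnorm v hv)) fun v hv h hh ↦ ?_
    by_cases hv₀ : v ∈ ({x₀, -x₀} : Set X)
    · refine Submodule.mem_sup_right ?_
      rcases hv₀ with rfl | rfl
      · exact ⟨h, Submodule.subset_span hh, rfl⟩
      · refine ⟨-h, Submodule.neg_mem _ ?_, by simp⟩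
        rw [← span_suppFunctionals_neg, ← map_neg]
        exact Submodule.subset_span hh
    · obtain ⟨c, rfl⟩ := exists_smul_eq_of_finrank_span_eq_one (hsmooth v hv hv₀) (hg v hv) hh
      exact Submodule.mem_sup_left ⟨c • v, by ext; simp⟩
  · rw [LinearMap.range_eq_map, ← span_eq_top_of_closedBall_subset_convexHull hV,
      Submodule.map_span_le]
    exact fun v hv ↦ hle v hv ⟨g, mem_span_suppFunctionals_of_mem_pm (hg v hv), rfl⟩

end SupportingFunctionalsOfOperators

section SmoothExtremePoints

/-- `M_T ∩ Ext(B_X)` for an operator between arbitrary normed spaces; `MTExt` is the case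
`ℓ∞³ → ℓ₁³`. -/
def normAttainingExtremePoints (T : X →L[ℝ] Y) : Set X :=
  {x ∈ sphere (0 : X) 1 | ‖T x‖ = ‖T‖} ∩ extremePoints ℝ (closedBall (0 : X) 1)

/-- The set `S_k` of those points of `M_T ∩ Ext(B_X)` whose image is `k`-smooth, for an operator
between arbitrary normed spaces; `Sk` is the case `ℓ∞³ → ℓ₁³`. -/
def smoothExtremePoints (T : X →L[ℝ] Y) (k : ℕ) : Set X :=
  {x ∈ normAttainingExtremePoints T |
    finrank ℝ (Submodule.span ℝ (suppFunctionals (T x))) = k}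

variable {T : X →L[ℝ] Y} {k : ℕ}

lemma neg_mem_smoothExtremePoints {x : X} (hx : x ∈ smoothExtremePoints T k) :
    -x ∈ smoothExtremePoints T k := by
  obtain ⟨⟨⟨hxnorm, hTx⟩, hxext⟩, hrank⟩ := hx
  refine ⟨⟨⟨by simpa using hxnorm, by simpa using hTx⟩,
    neg_mem_extremePoints_closedBall hxext⟩, ?_⟩
  rwa [map_neg, span_suppFunctionals_neg]

lemma ne_zero_of_mem_smoothExtremePoints {x : X} (hx : x ∈ smoothExtremePoints T k) : x ≠ 0 :=
  ne_zero_of_mem_unit_sphere ⟨x, hx.1.1.1⟩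

lemma smoothExtremePoints_eq_pair (hcard : (smoothExtremePoints T k).encard = 2) {x : X}
    (hx : x ∈ smoothExtremePoints T k) : smoothExtremePoints T k = {x, -x} := by
  have : IsAddTorsionFree X := .of_isTorsionFree ℝ X
  have hne : x ≠ -x := self_ne_neg.2 (ne_zero_of_mem_smoothExtremePoints hx)
  exact ((toFinite _).eq_of_subset_of_encard_le
    (pair_subset hx (neg_mem_smoothExtremePoints hx)) (by rw [hcard, encard_pair hne])).symm

lemma disjoint_smoothExtremePoints {l : ℕ} (hkl : k ≠ l) :
    Disjoint (smoothExtremePoints T k) (smoothExtremePoints T l) :=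
  disjoint_left.2 fun _ hk hl ↦ hkl (hk.2.symm.trans hl.2)

lemma extremePoints_closedBall_subset_of_encard_le {l : ℕ} (hkl : k ≠ l)
    (hfin : (extremePoints ℝ (closedBall (0 : X) 1)).Finite)
    (hcard : (extremePoints ℝ (closedBall (0 : X) 1)).encard ≤
      (smoothExtremePoints T k).encard + (smoothExtremePoints T l).encard) :
    extremePoints ℝ (closedBall (0 : X) 1) ⊆ smoothExtremePoints T k ∪ smoothExtremePoints T l := by
  rw [← encard_union_eq (disjoint_smoothExtremePoints hkl)] at hcard
  exact (hfin.eq_of_subset_of_encard_le'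
    (union_subset (fun _ hx ↦ hx.1.2) fun _ hx ↦ hx.1.2) hcard).ge

lemma suppFunctionals_nonempty_of_mem_smoothExtremePoints {x : X}
    (hx : x ∈ smoothExtremePoints T (k + 1)) : (suppFunctionals (T x)).Nonempty :=
  suppFunctionals_nonempty_of_finrank_ne_zero (by rw [hx.2]; exact k.succ_ne_zero)

lemma exists_forall_mem_pm_suppFunctionals
    (hext : extremePoints ℝ (closedBall (0 : X) 1) ⊆
      smoothExtremePoints T 1 ∪ smoothExtremePoints T (k + 1))
    {x₀ : X} (hx₀ : smoothExtremePoints T (k + 1) = {x₀, -x₀})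
    (hJ : ∀ x ∈ smoothExtremePoints T 1, ∀ z ∈ smoothExtremePoints T 1,
      pm (suppFunctionals (T x)) = pm (suppFunctionals (T z)))
    (hJ' : ∀ x ∈ smoothExtremePoints T 1, ∀ z ∈ smoothExtremePoints T (k + 1),
      pm (suppFunctionals (T x)) ⊆ pm (suppFunctionals (T z))) :
    ∃ g, ∀ v ∈ extremePoints ℝ (closedBall (0 : X) 1), g ∈ pm (suppFunctionals (T v)) := by
  rcases (smoothExtremePoints T 1).eq_empty_or_nonempty with hempty | ⟨x, hx⟩
  · obtain ⟨g, hg⟩ := suppFunctionals_nonempty_of_mem_smoothExtremePoints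
      (hx₀ ▸ mem_insert x₀ {-x₀} : x₀ ∈ smoothExtremePoints T (k + 1))
    refine ⟨g, fun v hv ↦ ?_⟩
    rw [hempty, empty_union, hx₀] at hext
    rcases hext hv with rfl | rfl
    · exact Or.inl hg
    · exact Or.inr (by simpa using neg_mem_suppFunctionals_neg hg)
  · obtain ⟨g, hg⟩ := suppFunctionals_nonempty_of_mem_smoothExtremePoints (k := 0) hx
    refine ⟨g, fun v hv ↦ ?_⟩
    rcases hext hv with hv | hv
    · exact hJ x hx v hv ▸ Or.inl hg
    · exact hJ' x hx v hv (Or.inl hg)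

theorem stmt_11_general [FiniteDimensional ℝ X] (T : X →L[ℝ] Y) (hT : ‖T‖ = 1)
    (hfin : (extremePoints ℝ (closedBall (0 : X) 1)).Finite) (k : ℕ)
    (hext : extremePoints ℝ (closedBall (0 : X) 1) ⊆
      smoothExtremePoints T 1 ∪ smoothExtremePoints T (k + 1))
    (hcard : (smoothExtremePoints T (k + 1)).encard = 2)
    (hJ : ∀ x ∈ smoothExtremePoints T 1, ∀ z ∈ smoothExtremePoints T 1,
      pm (suppFunctionals (T x)) = pm (suppFunctionals (T z)))
    (hJ' : ∀ x ∈ smoothExtremePoints T 1, ∀ z ∈ smoothExtremePoints T (k + 1),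
      pm (suppFunctionals (T x)) ⊆ pm (suppFunctionals (T z))) :
    finrank ℝ (Submodule.span ℝ (suppFunctionals T)) = finrank ℝ X + k := by
  obtain ⟨x₀, hx₀⟩ : (smoothExtremePoints T (k + 1)).Nonempty := by
    simp [← encard_ne_zero, hcard]
  have hpair := smoothExtremePoints_eq_pair hcard hx₀
  obtain ⟨g, hg⟩ := exists_forall_mem_pm_suppFunctionals hext hpair hJ hJ'
  have : FiniteDimensional ℝ (Submodule.span ℝ (suppFunctionals (T x₀))) :=
    .of_finrank_eq_succ hx₀.2
  have hdim := finrank_range_tensorFunctional_sup_map_flip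
    (mem_span_suppFunctionals_of_mem_pm (hg x₀ hx₀.1.2))
    (ne_zero_of_mem_pm_suppFunctionals (hg x₀ hx₀.1.2)) (ne_zero_of_mem_smoothExtremePoints hx₀)
  have hspan := span_suppFunctionals_eq_range_sup_map hT hfin extremePoints_subset
    (closedBall_subset_convexHull_extremePoints hfin) hg hx₀.1.2
    fun v hv hv₀ ↦ ((hext hv).resolve_right (hpair ▸ hv₀)).2
  rw [← hspan, hx₀.2] at hdim
  omega

end SmoothExtremePoints

theorem stmt_11
    (T : Linf3 →L[ℝ] L13) (hT : ‖T‖ = 1)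
    (hMT : MTExt T = {x₁, -x₁, x₂, -x₂, x₃, -x₃, x₄, -x₄})
    (h1 : (Sk T 1).encard = 6) (h2 : (Sk T 2).encard = 2)
    (h3 : (Sk T 3).encard = 0)
    (hJ : ∀ xi ∈ Sk T 1, ∀ xj ∈ Sk T 1,
      pm (suppFunctionals (T xi)) = pm (suppFunctionals (T xj)))
    (hJ' : ∀ xi ∈ Sk T 1, ∀ xk ∈ Sk T 2,
      pm (suppFunctionals (T xi)) ⊆ pm (extremePoints ℝ (suppFunctionals (T xk))))
    :
    finrank ℝ (Submodule.span ℝ (suppFunctionals T)) = 4 := by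
  have hcard : (extremePoints ℝ (closedBall (0 : Linf3) 1)).encard = 8 := by
    rw [encard_extremePoints_closedBall_pi]
    norm_num
  have hfin : (extremePoints ℝ (closedBall (0 : Linf3) 1)).Finite :=
    finite_of_encard_eq_coe (k := 8) hcard
  have hsum : (Sk T 1).encard + (Sk T 2).encard = 8 := by
    rw [h1, h2]
    norm_num
  have hext : extremePoints ℝ (closedBall (0 : Linf3) 1) ⊆ Sk T 1 ∪ Sk T 2 :=
    extremePoints_closedBall_subset_of_encard_le (by decide) hfin (hcard.trans hsum.symm).le
  have hgen := stmt_11_general T hT hfin 1 hext h2 hJ fun xi hxi xk hxk ↦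
    (hJ' xi hxi xk hxk).trans
      (union_subset_union extremePoints_subset (neg_subset_neg.2 extremePoints_subset))
  simpa using hgen
end
end
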